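/- arXiv:math/0702036 — 3 statements merged into one kernel-verified Lean document; each statement's English description precedes it below -/
import Mathlib

section
/- There exist constants c > 0 and s > 0, independent of n, such that if the matching score of two ones satisfies S ≥ s, then the variance of the optimal alignment score satisfies Var[L_n] ≥ c·n for all n ∈ ℕ. -/
/-!
Regard the two strings as one uniform random string `w` of letter pairs, and put
`g a = 1 - 4 · 1{a = (0, 0)}`, a centred function of a letter pair with `E[g²] = 3`. The variables
`g (w i)` are orthogonal, so by Bessel's inequality `∑ i, E[L g (w i)]² ≤ 3 Var L`, and it suffices
to bound every covariance `E[L g (w i)] = E[L] - 4 E[L; w i = (0, 0)]` from below.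

Compare both terms with the optimal score of `n - 1` letter pairs, whose mean is `M`.
* Appending a letter pair to the strings allows us to match it, so `E[L] ≥ M + (S + 1) / 4`.
* Deleting a pair `(0, 0)` destroys at most two matches, each worth at most `1`, and what remains is
  uniform and independent of the deleted pair, so `E[L; w i = (0, 0)] ≤ (M + 2) / 4`.

Every covariance is thus at least `(S - 7) / 4`, whence `Var L ≥ (S - 7)² n / 48` for `S ≥ 7`.
-/

open scoped Classical
open Finset

noncomputable section

/-- Score of aligning two letters (`true` = 1, `false` = 0):
`s(1,1) = S`, `s(0,0) = 1`, `s(1,0) = s(0,1) = 0`. -/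
def letterScore (S : ℝ) (a b : Bool) : ℝ :=
  if a = true ∧ b = true then S else if a = false ∧ b = false then 1 else 0

/-- Score of the alignment `(π, ν)` of the strings `x` and `y`. -/
def alignScore (S : ℝ) {n k : ℕ} (x y : Fin n → Bool) (π ν : Fin k → Fin n) : ℝ :=
  ∑ i : Fin k, letterScore S (x (π i)) (y (ν i))

/-- The optimal alignment score of two binary strings of length `n`. -/
def optScore (S : ℝ) (n : ℕ) (x y : Fin n → Bool) : ℝ :=
  sSup {r : ℝ | ∃ (k : ℕ) (π ν : Fin k → Fin n),
    StrictMono π ∧ StrictMono ν ∧ r = alignScore S x y π ν}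

/-- The string `x`, extended by the (neutral) letter `true` outside `[0, n)`. -/
def ext {n : ℕ} (x : Fin n → Bool) : ℕ → Bool :=
  fun j => if h : j < n then x ⟨j, h⟩ else true

/-- `blockStart x ℓ i` holds iff a block of zeros of length `ℓ` of `x` starts at position `i`:
positions `i, …, i+ℓ-1` carry zeros, and they are delimited by ones (or the ends of `x`). -/
def blockStart {n : ℕ} (x : Fin n → Bool) (ℓ i : ℕ) : Prop :=
  0 < ℓ ∧ i + ℓ ≤ n ∧ (∀ j ∈ Finset.Ico i (i + ℓ), ext x j = false) ∧
    (i = 0 ∨ ext x (i - 1) = true) ∧ ext x (i + ℓ) = true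

/-- The set of starting positions of blocks of zeros of length `ℓ` in `x`. -/
def starts {n : ℕ} (x : Fin n → Bool) (ℓ : ℕ) : Finset ℕ :=
  (Finset.range n).filter fun i => blockStart x ℓ i

/-- The number of blocks of zeros of length `ℓ` in `x`. -/
def numBlocks {n : ℕ} (x : Fin n → Bool) (ℓ : ℕ) : ℕ := (starts x ℓ).card

/-- Probability of an event under a uniform random binary string of length `n`. -/
def probX (n : ℕ) (E : (Fin n → Bool) → Prop) : ℝ :=
  ((Finset.univ.filter E).card : ℝ) / 2 ^ n

/-- Probability of an event under two independent uniform random binary strings of length `n`. -/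
def probXY (n : ℕ) (E : (Fin n → Bool) → (Fin n → Bool) → Prop) : ℝ :=
  ((Finset.univ.filter (fun p : (Fin n → Bool) × (Fin n → Bool) => E p.1 p.2)).card : ℝ) / 4 ^ n

/-- Expectation of a function of a uniform random binary string of length `n`. -/
def expX (n : ℕ) (f : (Fin n → Bool) → ℝ) : ℝ := (∑ x, f x) / 2 ^ n

/-- Expectation of a function of two independent uniform random binary strings of length `n`. -/
def expXY (n : ℕ) (f : (Fin n → Bool) → (Fin n → Bool) → ℝ) : ℝ := (∑ x, ∑ y, f x y) / 4 ^ n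

/-- The string obtained from `x` by removing one zero from the block of zeros starting at `p`
and inserting one extra zero into the block of zeros starting at `q`. -/
def modifyStr {n : ℕ} (x : Fin n → Bool) (p q : ℕ) : Fin n → Bool :=
  fun i => (((List.ofFn x).eraseIdx p).insertIdx (if p < q then q - 1 else q) false).getD i false

/-- The variance of the optimal alignment score `L_n` of two independent uniform
binary strings of length `n`. -/
def varL (S : ℝ) (n : ℕ) : ℝ :=
  expXY n (fun x y => (optScore S n x y - expXY n (optScore S n)) ^ 2)

open scoped BigOperators

section Averages

variable {K : Type*} [Field K] [CharZero K] {α : Type*} [Fintype α] {n : ℕ}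

lemma expect_removeNth_mul_letter (i : Fin (n + 1)) (F : (Fin n → α) → K) (g : α → K) :
    𝔼 w : Fin (n + 1) → α, F (i.removeNth w) * g (w i) = (𝔼 u, F u) * 𝔼 a, g a := by
  rw [mul_comm, Fintype.expect_mul_expect, ← Finset.expect_product', univ_product_univ]
  exact Fintype.expect_equiv (Fin.insertNthEquiv (fun _ => α) i).symm _ _ fun w => mul_comm _ _

variable [Nonempty α]

lemma expect_removeNth (i : Fin (n + 1)) (F : (Fin n → α) → K) :
    𝔼 w : Fin (n + 1) → α, F (i.removeNth w) = 𝔼 u, F u := by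
  simpa using expect_removeNth_mul_letter i F 1

lemma expect_letter (i : Fin n) (g : α → K) : 𝔼 w : Fin n → α, g (w i) = 𝔼 a, g a := by
  obtain _ | n := n
  · exact i.elim0
  · simpa using expect_removeNth_mul_letter i 1 g

lemma expect_letter_mul_letter {i j : Fin n} (hij : i ≠ j) (g h : α → K) :
    𝔼 w : Fin n → α, g (w i) * h (w j) = (𝔼 a, g a) * 𝔼 a, h a := by
  obtain _ | n := n
  · exact i.elim0
  · obtain ⟨r, rfl⟩ := Fin.exists_succAbove_eq hij
    rw [← expect_letter r g]
    exact expect_removeNth_mul_letter j (fun u => g (u r)) h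

end Averages

section Bessel

variable {K : Type*} [Field K] [LinearOrder K] [IsStrictOrderedRing K]

lemma sum_sq_expect_mul_le_of_orthogonal {Ω ι : Type*} [Fintype Ω] [Fintype ι] [DecidableEq ι]
    (f : Ω → K) (g : ι → Ω → K) {v : K} (hv : 0 ≤ v)
    (hg : ∀ i j, 𝔼 ω, g i ω * g j ω = if i = j then v else 0) :
    ∑ i, (𝔼 ω, f ω * g i ω) ^ 2 ≤ v * 𝔼 ω, f ω ^ 2 := by
  set c : ι → K := fun i => 𝔼 ω, f ω * g i ω
  set C : K := ∑ i, c i ^ 2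
  have h_inner : 𝔼 ω, f ω * ∑ i, c i * g i ω = C := by
    simp_rw [Finset.mul_sum, Finset.expect_sum_comm, mul_left_comm (f _), ← Finset.mul_expect]
    exact Finset.sum_congr rfl fun i _ => (sq (c i)).symm
  have h_norm : 𝔼 ω, (∑ i, c i * g i ω) ^ 2 = v * C := by
    simp_rw [sq, Finset.sum_mul_sum, Finset.expect_sum_comm, mul_mul_mul_comm (c _) (g _ _),
      ← Finset.mul_expect, hg]
    simp [C, Finset.mul_sum, sq, mul_comm]
  have h_cauchy_schwarz : C * C ≤ v * (𝔼 ω, f ω ^ 2) * C := by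
    have h := Finset.expect_mul_sq_le_sq_mul_sq univ f fun ω => ∑ i, c i * g i ω
    rw [h_inner, h_norm] at h
    linarith
  have hC : 0 ≤ C := Finset.sum_nonneg fun i _ => sq_nonneg _
  obtain hC | hC := hC.eq_or_lt
  · rw [← hC]
    exact mul_nonneg hv (Finset.expect_nonneg fun ω _ => sq_nonneg _)
  · exact le_of_mul_le_mul_right h_cauchy_schwarz hC

lemma sum_sq_expect_mul_letter_le_variance {α : Type*} [Fintype α] [Nonempty α] {n : ℕ}
    (f : (Fin n → α) → K) {g : α → K} (hg : 𝔼 a, g a = 0) :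
    ∑ i, (𝔼 w, f w * g (w i)) ^ 2 ≤ (𝔼 a, g a ^ 2) * 𝔼 w, (f w - 𝔼 u, f u) ^ 2 := by
  have h_cov (i : Fin n) : 𝔼 w, (f w - 𝔼 u, f u) * g (w i) = 𝔼 w, f w * g (w i) := by
    simp_rw [sub_mul, Finset.expect_sub_distrib, ← Finset.mul_expect]
    rw [expect_letter i g, hg, mul_zero, sub_zero]
  have h_orth (i j : Fin n) :
      𝔼 w : Fin n → α, g (w i) * g (w j) = if i = j then 𝔼 a, g a ^ 2 else 0 := by
    split_ifs with hij
    · simp_rw [hij, ← sq]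
      exact expect_letter j fun a => g a ^ 2
    · rw [expect_letter_mul_letter hij g g, hg, mul_zero]
  simp_rw [← h_cov]
  exact sum_sq_expect_mul_le_of_orthogonal (fun w => f w - 𝔼 u, f u) (fun i w => g (w i))
    (Finset.expect_nonneg fun a _ => sq_nonneg (g a)) h_orth

end Bessel

section OptimalScore

variable {S : ℝ} {n k : ℕ}

lemma letterScore_le_max (a b : Bool) : letterScore S a b ≤ max S 1 := by
  cases a <;> cases b <;> simp [letterScore]

lemma letterScore_false_left_le (b : Bool) : letterScore S false b ≤ 1 := by
  cases b <;> simp [letterScore]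

lemma letterScore_false_right_le (a : Bool) : letterScore S a false ≤ 1 := by
  cases a <;> simp [letterScore]

lemma alignScore_le (x y : Fin n → Bool) {π : Fin k → Fin n} (hπ : StrictMono π)
    (ν : Fin k → Fin n) : alignScore S x y π ν ≤ n * max S 1 := by
  have hk : k ≤ n := by simpa using Fintype.card_le_of_injective π hπ.injective
  calc alignScore S x y π ν ≤ ∑ _i : Fin k, max S 1 :=
        Finset.sum_le_sum fun _ _ => letterScore_le_max _ _
    _ = k * max S 1 := by simp
    _ ≤ n * max S 1 := by gcongr

lemma alignScore_le_optScore (x y : Fin n → Bool) {π ν : Fin k → Fin n}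
    (hπ : StrictMono π) (hν : StrictMono ν) : alignScore S x y π ν ≤ optScore S n x y := by
  refine le_csSup ⟨n * max S 1, ?_⟩ ⟨k, π, ν, hπ, hν, rfl⟩
  rintro _ ⟨k, π, ν, hπ, -, rfl⟩
  exact alignScore_le x y hπ ν

lemma optScore_le {x y : Fin n → Bool} {C : ℝ}
    (h : ∀ (k : ℕ) (π ν : Fin k → Fin n), StrictMono π → StrictMono ν →
      alignScore S x y π ν ≤ C) : optScore S n x y ≤ C := by
  refine csSup_le ⟨_, 0, Fin.elim0, Fin.elim0, fun i => i.elim0, fun i => i.elim0, rfl⟩ ?_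
  rintro _ ⟨k, π, ν, hπ, hν, rfl⟩
  exact h k π ν hπ hν

lemma sum_letterScore_le_optScore {κ : Type*} [LinearOrder κ] [Fintype κ] (x y : Fin n → Bool)
    {π ν : κ → Fin n} (hπ : StrictMono π) (hν : StrictMono ν) :
    ∑ l, letterScore S (x (π l)) (y (ν l)) ≤ optScore S n x y := by
  let e := monoEquivOfFin κ rfl
  rw [← e.toEquiv.sum_comp]
  exact alignScore_le_optScore x y (hπ.comp e.strictMono) (hν.comp e.strictMono)

lemma strictMono_snoc {α : Type*} [Preorder α] {f : Fin k → α} (hf : StrictMono f) {a : α}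
    (ha : ∀ l, f l < a) : StrictMono (Fin.snoc f a : Fin (k + 1) → α) := by
  intro l l' h
  cases l using Fin.lastCases with
  | last => exact absurd h (Fin.le_last l').not_gt
  | cast l =>
    cases l' using Fin.lastCases with
    | last => simpa using ha l
    | cast l' => simpa using hf (Fin.castSucc_lt_castSucc_iff.1 h)

lemma optScore_init_add_letterScore_le (x y : Fin (n + 1) → Bool) :
    optScore S n (Fin.init x) (Fin.init y) + letterScore S (x (Fin.last n)) (y (Fin.last n)) ≤
      optScore S (n + 1) x y := by
  rw [← le_sub_iff_add_le]
  refine optScore_le fun k π ν hπ hν => ?_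
  have h := alignScore_le_optScore (S := S) x y
    (strictMono_snoc (Fin.strictMono_castSucc.comp hπ) fun l => Fin.castSucc_lt_last (π l))
    (strictMono_snoc (Fin.strictMono_castSucc.comp hν) fun l => Fin.castSucc_lt_last (ν l))
  rw [alignScore, Fin.sum_univ_castSucc] at h
  simp only [Fin.snoc_castSucc, Fin.snoc_last] at h
  exact le_sub_iff_add_le.2 h

lemma exists_strictMono_succAbove_eq {κ : Type*} [Preorder κ] {i : Fin (n + 1)}
    {π : κ → Fin (n + 1)} (hπ : StrictMono π) (hi : ∀ l, π l ≠ i) :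
    ∃ p : κ → Fin n, StrictMono p ∧ ∀ l, i.succAbove (p l) = π l := by
  choose p hp using fun l => Fin.exists_succAbove_eq (hi l)
  refine ⟨p, fun l l' h => ?_, hp⟩
  rw [← (Fin.strictMono_succAbove i).lt_iff_lt, hp, hp]
  exact hπ h

lemma sum_letterScore_avoiding_le_optScore (x y : Fin (n + 1) → Bool) (i j : Fin (n + 1))
    {π ν : Fin k → Fin (n + 1)} (hπ : StrictMono π) (hν : StrictMono ν) :
    ∑ l with π l ≠ i ∧ ν l ≠ j, letterScore S (x (π l)) (y (ν l)) ≤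
      optScore S n (i.removeNth x) (j.removeNth y) := by
  let κ := {l // π l ≠ i ∧ ν l ≠ j}
  obtain ⟨p, hp, hpπ⟩ := exists_strictMono_succAbove_eq (κ := κ)
    (hπ.comp (Subtype.strictMono_coe _)) fun l => l.2.1
  obtain ⟨q, hq, hqν⟩ := exists_strictMono_succAbove_eq (κ := κ)
    (hν.comp (Subtype.strictMono_coe _)) fun l => l.2.2
  calc ∑ l with π l ≠ i ∧ ν l ≠ j, letterScore S (x (π l)) (y (ν l))
      = ∑ l : κ, letterScore S (x (π l)) (y (ν l)) :=
        Finset.sum_subtype _ (by simp) _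
    _ = ∑ l : κ, letterScore S (i.removeNth x (p l)) (j.removeNth y (q l)) := by
        simp only [Fin.removeNth, hpπ, hqν, Function.comp_apply]
    _ ≤ optScore S n (i.removeNth x) (j.removeNth y) := sum_letterScore_le_optScore _ _ hp hq

lemma card_filter_eq_or_eq_le_two {ι β γ : Type*} [Fintype ι] [DecidableEq β] [DecidableEq γ]
    {π : ι → β} {ν : ι → γ} (hπ : π.Injective) (hν : ν.Injective) (i : β) (j : γ) :
    #{l | π l = i ∨ ν l = j} ≤ 2 := by
  have h_fst : #{l | π l = i} ≤ 1 := card_le_one.2 fun l hl l' hl' => hπ (by simp_all)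
  have h_snd : #{l | ν l = j} ≤ 1 := card_le_one.2 fun l hl l' hl' => hν (by simp_all)
  rw [filter_or]
  exact (card_union_le _ _).trans (add_le_add h_fst h_snd)

lemma optScore_le_optScore_removeNth_add_two {x y : Fin (n + 1) → Bool} {i j : Fin (n + 1)}
    (hx : x i = false) (hy : y j = false) :
    optScore S (n + 1) x y ≤ optScore S n (i.removeNth x) (j.removeNth y) + 2 := by
  refine optScore_le fun k π ν hπ hν => ?_
  have h_lost : ∑ l with π l = i ∨ ν l = j, letterScore S (x (π l)) (y (ν l)) ≤ 2 := by
    calc ∑ l with π l = i ∨ ν l = j, letterScore S (x (π l)) (y (ν l))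
        ≤ #{l | π l = i ∨ ν l = j} • (1 : ℝ) := by
          refine Finset.sum_le_card_nsmul _ _ _ fun l hl => ?_
          obtain h | h := (Finset.mem_filter.1 hl).2
          · rw [h, hx]
            exact letterScore_false_left_le _
          · rw [h, hy]
            exact letterScore_false_right_le _
      _ ≤ 2 := by
          rw [nsmul_one]
          exact_mod_cast card_filter_eq_or_eq_le_two hπ.injective hν.injective i j
  have h_kept := sum_letterScore_avoiding_le_optScore (S := S) x y i j hπ hν
  simp only [ne_eq, ← not_or] at h_kept
  rw [alignScore, ← Finset.sum_filter_not_add_sum_filter univ fun l => π l = i ∨ ν l = j]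
  exact add_le_add h_kept h_lost

end OptimalScore

section RandomStrings

lemma expXY_eq_expect (n : ℕ) (f : (Fin n → Bool) → (Fin n → Bool) → ℝ) :
    expXY n f = 𝔼 w : Fin n → Bool × Bool, f (Prod.fst ∘ w) (Prod.snd ∘ w) := by
  have h_prod : expXY n f = 𝔼 p : (Fin n → Bool) × (Fin n → Bool), f p.1 p.2 := by
    rw [expXY, Fintype.expect_eq_sum_div_card, Fintype.sum_prod_type]
    norm_num [← mul_pow]
  rw [h_prod]
  exact (Fintype.expect_equiv (Equiv.arrowProdEquivProdArrow _ _ _) _ _ fun _ => rfl).symm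

variable {S : ℝ} {n : ℕ}

/-- The optimal alignment score as a function of a single string of letter pairs, whose `i`-th
letter consists of the `i`-th letters of the two aligned strings. -/
def pairScore (S : ℝ) {n : ℕ} (w : Fin n → Bool × Bool) : ℝ :=
  optScore S n (Prod.fst ∘ w) (Prod.snd ∘ w)

lemma pairScore_init_add_letterScore_le (w : Fin (n + 1) → Bool × Bool) :
    pairScore S (Fin.init w) + letterScore S (w (Fin.last n)).1 (w (Fin.last n)).2 ≤
      pairScore S w :=
  optScore_init_add_letterScore_le (Prod.fst ∘ w) (Prod.snd ∘ w)

lemma pairScore_le_pairScore_removeNth_add_two {w : Fin (n + 1) → Bool × Bool}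
    {i : Fin (n + 1)} (hw : w i = (false, false)) :
    pairScore S w ≤ pairScore S (i.removeNth w) + 2 :=
  optScore_le_optScore_removeNth_add_two (x := Prod.fst ∘ w) (y := Prod.snd ∘ w)
    (congrArg Prod.fst hw) (congrArg Prod.snd hw)

/-- The indicator that both letters of a pair are zero. -/
def zeroPair (a : Bool × Bool) : ℝ := if a = (false, false) then 1 else 0

/-- The indicator of a pair of zeros, centred and scaled by `-4` so that its covariance with the
optimal score is positive for large `S`. -/
def zeroContrast (a : Bool × Bool) : ℝ := 1 - 4 * zeroPair a

lemma expect_bool_prod (g : Bool × Bool → ℝ) :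
    𝔼 a, g a = (g (true, true) + g (true, false) + g (false, true) + g (false, false)) / 4 := by
  rw [Fintype.expect_eq_sum_div_card, Fintype.sum_prod_type]
  simp only [Fintype.sum_bool, Fintype.card_prod, Fintype.card_bool, add_assoc]
  norm_num

lemma expect_letterScore : 𝔼 a : Bool × Bool, letterScore S a.1 a.2 = (S + 1) / 4 := by
  simp [expect_bool_prod, letterScore]

lemma expect_zeroPair : 𝔼 a, zeroPair a = 1 / 4 := by
  simp [zeroPair]

lemma expect_zeroContrast : 𝔼 a, zeroContrast a = 0 := by
  simp only [expect_bool_prod, zeroContrast, zeroPair]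
  norm_num

lemma expect_zeroContrast_sq : 𝔼 a, zeroContrast a ^ 2 = 3 := by
  simp only [expect_bool_prod, zeroContrast, zeroPair]
  norm_num

lemma expect_pairScore_add_le_expect_pairScore_succ (S : ℝ) (n : ℕ) :
    (𝔼 u : Fin n → Bool × Bool, pairScore S u) + (S + 1) / 4 ≤
      𝔼 w : Fin (n + 1) → Bool × Bool, pairScore S w := by
  rw [← expect_letterScore, ← expect_removeNth (Fin.last n) (pairScore S),
    ← expect_letter (Fin.last n) fun a : Bool × Bool => letterScore S a.1 a.2,
    ← Finset.expect_add_distrib]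
  refine Finset.expect_le_expect fun w _ => ?_
  rw [Fin.removeNth_last]
  exact pairScore_init_add_letterScore_le w

lemma expect_pairScore_mul_zeroPair_le (i : Fin (n + 1)) :
    𝔼 w, pairScore S w * zeroPair (w i) ≤
      ((𝔼 u : Fin n → Bool × Bool, pairScore S u) + 2) / 4 := by
  calc 𝔼 w, pairScore S w * zeroPair (w i)
      ≤ 𝔼 w : Fin (n + 1) → Bool × Bool, (pairScore S (i.removeNth w) + 2) * zeroPair (w i) := by
        refine Finset.expect_le_expect fun w _ => ?_
        by_cases h : w i = (false, false)
        · simpa [zeroPair, h] using pairScore_le_pairScore_removeNth_add_two h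
        · simp [zeroPair, h]
    _ = ((𝔼 u : Fin n → Bool × Bool, pairScore S u) + 2) / 4 := by
        rw [expect_removeNth_mul_letter i (fun u => pairScore S u + 2) zeroPair,
          Finset.expect_add_distrib, Fintype.expect_const, expect_zeroPair]
        ring

lemma le_expect_pairScore_mul_zeroContrast (i : Fin n) :
    (S - 7) / 4 ≤ 𝔼 w, pairScore S w * zeroContrast (w i) := by
  obtain _ | n := n
  · exact i.elim0
  have h_split : 𝔼 w, pairScore S w * zeroContrast (w i) =
      (𝔼 w : Fin (n + 1) → Bool × Bool, pairScore S w) -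
        4 * 𝔼 w, pairScore S w * zeroPair (w i) := by
    simp_rw [zeroContrast, mul_sub, mul_one, mul_left_comm _ (4 : ℝ), Finset.expect_sub_distrib,
      Finset.mul_expect]
  have h_append := expect_pairScore_add_le_expect_pairScore_succ S n
  have h_delete := expect_pairScore_mul_zeroPair_le (S := S) i
  linarith

lemma varL_eq_expect (S : ℝ) (n : ℕ) :
    varL S n = 𝔼 w : Fin n → Bool × Bool,
      (pairScore S w - 𝔼 u : Fin n → Bool × Bool, pairScore S u) ^ 2 := by
  simp only [varL, expXY_eq_expect, pairScore]

lemma sq_div_mul_le_varL (hS : 7 ≤ S) (n : ℕ) : (S - 7) ^ 2 / 48 * n ≤ varL S n := by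
  have h_bessel : ∑ i : Fin n, (𝔼 w, pairScore S w * zeroContrast (w i)) ^ 2 ≤ 3 * varL S n := by
    rw [varL_eq_expect, ← expect_zeroContrast_sq]
    exact sum_sq_expect_mul_letter_le_variance (pairScore S) expect_zeroContrast
  have h_cov : ∑ _i : Fin n, ((S - 7) / 4) ^ 2 ≤
      ∑ i : Fin n, (𝔼 w, pairScore S w * zeroContrast (w i)) ^ 2 :=
    Finset.sum_le_sum fun i _ =>
      pow_le_pow_left₀ (by linarith) (le_expect_pairScore_mul_zeroContrast i) 2
  rw [Finset.sum_const, card_univ, Fintype.card_fin, nsmul_eq_mul] at h_cov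
  linarith

end RandomStrings

/-- there exist constants `c > 0` and `s > 0`, independent of `n`, such that
if `S ≥ s` then `Var[L_n] ≥ c · n` for all `n ∈ ℕ`. -/
theorem variance_linear_lower_bound :
    ∃ c > (0 : ℝ), ∃ s > (0 : ℝ), ∀ S : ℝ, s ≤ S → ∀ n : ℕ, c * n ≤ varL S n := by
  refine ⟨1 / 3, by norm_num, 11, by norm_num, fun S hS n => ?_⟩
  calc 1 / 3 * (n : ℝ) ≤ (S - 7) ^ 2 / 48 * n := by
        gcongr ?_ * _
        nlinarith
    _ ≤ varL S n := sq_div_mul_le_varL (by linarith) n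
end
end

section
/- Let m⃗ = (m₁, m₂, m₄, m₅) ∈ ℕ⁴ with m₁ ≥ 1, m₅ ≥ 1 and such that the set of binary strings x of length n with N⃗(x) = m⃗ is nonempty. Let X' be uniformly distributed on the set of binary strings x of length n with N⃗(x) = m⃗, and let X'' be obtained from X' by choosing uniformly at random one block of zeros of length 5 in X' and removing one zero from it, and choosing uniformly at random one block of zeros of length 1 in X' and extending it by the removed zero. Then X'' is uniformly distributed on the set of binary strings x of length n with N⃗(x) = m⃗ + e⃗, where e⃗ = (−1, 1, 1, −1); equivalently, X'' has the law of a uniform random binary string of length n conditioned on its block-count vector equalling m⃗ + e⃗. -/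
/-!
Join `x` to `z` by one edge for every way of turning `x` into `z` by moving a zero from a block of
length `a + 1` to a block of length `b`. A string `x` has `N_{a+1}(x) N_b(x)` edges. The moved zero
lands in a block of length `b + 1` of `z`, the block it left has length `a` in `z`, and moving the
zero back recovers `x`; hence `z` has `N_{b+1}(z) N_a(z)` edges. So the bipartite graph between the
two families of strings with prescribed block counts is biregular, and a random edge at a uniform
vertex of one side leads to a uniform vertex of the other.

The effect of a move on the block counts is read off from the word that `x` and `z` have in common:
`x` without the moved zero at its old position is `z` without it at its new position.
-/

open scoped Classical
open Finset

noncomputable section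

/-- The set of binary strings of length `n` whose numbers of blocks of zeros of lengths
`1, 2, 4, 5` are `m1, m2, m4, m5` respectively. -/
def strSet (n m1 m2 m4 m5 : ℕ) : Finset (Fin n → Bool) :=
  Finset.univ.filter fun x =>
    numBlocks x 1 = m1 ∧ numBlocks x 2 = m2 ∧ numBlocks x 4 = m4 ∧ numBlocks x 5 = m5

/-- The number of pairs `(p, q)`, with `p` the start of a block of zeros of length 5 of `x` and
`q` the start of a block of zeros of length 1 of `x`, whose associated modification of `x`
(removing a zero from the first block and adding it to the second) produces `z`. -/
def pairCount {n : ℕ} (x z : Fin n → Bool) : ℕ :=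
  (((starts x 5) ×ˢ (starts x 1)).filter fun pq => modifyStr x pq.1 pq.2 = z).card

section Skip

variable {p i j : ℕ}

/-- The increasing enumeration of `ℕ \ {p}`, the analogue on `ℕ` of `Fin.succAbove`. The word `f`
with its letter at position `p` deleted is `f ∘ skipAt p`. -/
def skipAt (p i : ℕ) : ℕ := if i < p then i else i + 1

/-- The left inverse of `skipAt p`: the position after the deletion of position `p`. -/
def unskipAt (p j : ℕ) : ℕ := if p < j then j - 1 else j

/-- The pair of positions whose move undoes the move of a zero from position `pq.1` to position
`pq.2`: the moved zero lands at `unskipAt pq.1 pq.2`, and the gap it left is now at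
`skipAt (unskipAt pq.1 pq.2) pq.1`. -/
def reverseMove (pq : ℕ × ℕ) : ℕ × ℕ :=
  (unskipAt pq.1 pq.2, skipAt (unskipAt pq.1 pq.2) pq.1)

lemma skipAt_injective (p : ℕ) : Function.Injective (skipAt p) := fun i j h => by
  grind [skipAt]

lemma skipAt_ne (p i : ℕ) : skipAt p i ≠ p := by
  grind [skipAt]

lemma unskipAt_skipAt (p i : ℕ) : unskipAt p (skipAt p i) = i := by
  grind [skipAt, unskipAt]

lemma skipAt_unskipAt (h : j ≠ p) : skipAt p (unskipAt p j) = j := by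
  grind [skipAt, unskipAt]

lemma unskipAt_eq_self_iff : unskipAt p j = p ↔ j = p ∨ j = p + 1 := by
  grind [unskipAt]

lemma unskipAt_le_pred {n : ℕ} (hp : p < n) (hj : j < n) : unskipAt p j ≤ n - 1 := by
  grind [unskipAt]

lemma reverseMove_reverseMove {pq : ℕ × ℕ} (h : pq.2 ≠ pq.1) :
    reverseMove (reverseMove pq) = pq := by
  simp only [reverseMove, unskipAt_skipAt, skipAt_unskipAt h]

end Skip

section Block

variable {f g : ℕ → Bool} {ℓ ℓ' L p i : ℕ}

/-- A block of zeros of length `ℓ` starts at position `i` of the infinite word `f`. -/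
def IsBlock (f : ℕ → Bool) (ℓ i : ℕ) : Prop :=
  0 < ℓ ∧ (∀ j ∈ Finset.Ico i (i + ℓ), f j = false) ∧ (i = 0 ∨ f (i - 1) = true) ∧
    f (i + ℓ) = true

/-- The number of blocks of zeros of length `ℓ` of an infinite word, which may be infinite. -/
def blockCount (f : ℕ → Bool) (ℓ : ℕ) : ℕ∞ := {i | IsBlock f ℓ i}.encard

lemma IsBlock.apply_start (h : IsBlock f ℓ i) : f i = false := by
  grind [IsBlock]

lemma IsBlock.length_unique (h : IsBlock f ℓ i) (h' : IsBlock f ℓ' i) : ℓ = ℓ' := by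
  grind [IsBlock]

lemma IsBlock.ne_succ (h : IsBlock f ℓ i) (hp : f p = false) : i ≠ p + 1 := by
  grind [IsBlock]

/-- The one at `p - 1` confines the blocks starting before `p` to the common prefix. -/
lemma IsBlock.of_eqOn_Iio (h : IsBlock f ℓ i) (hfg : Set.EqOn f g (Set.Iio p))
    (hp : f (p - 1) = true) (hi : i < p) : IsBlock g ℓ i := by
  obtain ⟨hℓ, hzero, hpre, hend⟩ := h
  have hlt : i + ℓ < p := by grind
  grind [IsBlock, Set.EqOn]

lemma isBlock_iff_of_eqOn_Iio (hfg : Set.EqOn f g (Set.Iio p)) (hp : f (p - 1) = true)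
    (hi : i < p) : IsBlock f ℓ i ↔ IsBlock g ℓ i :=
  ⟨fun h => h.of_eqOn_Iio hfg hp hi, fun h =>
    h.of_eqOn_Iio hfg.symm (hfg (show p - 1 < p by lia) ▸ hp) hi⟩

lemma forall_mem_Ico_comp_skipAt (hi : p ≤ i) :
    (∀ j ∈ Finset.Ico i (i + ℓ), (f ∘ skipAt p) j = false) ↔
      ∀ j ∈ Finset.Ico (i + 1) (i + 1 + ℓ), f j = false := by
  have hshift : ∀ j ∈ Finset.Ico i (i + ℓ), (f ∘ skipAt p) j = f (j + 1) := by
    grind [skipAt]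
  rw [add_right_comm, ← Finset.map_add_right_Ico, Finset.forall_mem_map]
  exact forall₂_congr fun j hj => by rw [hshift j hj, addRightEmbedding_apply]

lemma isBlock_comp_skipAt_of_lt (hi : p < i) :
    IsBlock (f ∘ skipAt p) ℓ i ↔ IsBlock f ℓ (i + 1) := by
  have hpre : (f ∘ skipAt p) (i - 1) = f i := by grind [skipAt]
  have hend : (f ∘ skipAt p) (i + ℓ) = f (i + 1 + ℓ) := by grind [skipAt]
  rw [IsBlock, IsBlock, forall_mem_Ico_comp_skipAt hi.le, hpre, hend]
  grind

lemma isBlock_comp_skipAt_self (hL : 0 < L) (hp : f p = false) :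
    IsBlock (f ∘ skipAt p) L p ↔ IsBlock f (L + 1) p := by
  have hpre : p = 0 ∨ (f ∘ skipAt p) (p - 1) = f (p - 1) := by grind [skipAt]
  have hend : (f ∘ skipAt p) (p + L) = f (p + (L + 1)) := by grind [skipAt]
  rw [IsBlock, IsBlock, forall_mem_Ico_comp_skipAt le_rfl, hend]
  grind

lemma isBlock_comp_skipAt_of_ne (hpre : p = 0 ∨ f (p - 1) = true) (hi : i ≠ p) :
    IsBlock (f ∘ skipAt p) ℓ i ↔ IsBlock f ℓ (skipAt p i) := by
  rcases lt_or_gt_of_ne hi with hlt | hgt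
  · have hprefix : Set.EqOn f (f ∘ skipAt p) (Set.Iio p) := by
      grind [skipAt, Set.EqOn]
    rw [skipAt, if_pos hlt]
    exact (isBlock_iff_of_eqOn_Iio hprefix (hpre.resolve_left (by lia)) hlt).symm
  · rw [skipAt, if_neg hgt.not_gt]
    exact isBlock_comp_skipAt_of_lt hgt

/-- No block starts at `p + 1 = skipAt p p`, which is preceded by a zero. -/
lemma image_skipAt_blocks (hf : IsBlock f L p) :
    skipAt p '' ({i | IsBlock (f ∘ skipAt p) ℓ i} \ {p}) = {i | IsBlock f ℓ i} \ {p} := by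
  ext j
  constructor
  · rintro ⟨i, ⟨hi, hip⟩, rfl⟩
    exact ⟨(isBlock_comp_skipAt_of_ne hf.2.2.1 hip).1 hi, skipAt_ne p i⟩
  · rintro ⟨hj, hjp⟩
    have hne : unskipAt p j ≠ p := fun h =>
      (unskipAt_eq_self_iff.1 h).elim hjp (hj.ne_succ hf.apply_start)
    refine ⟨unskipAt p j, ⟨?_, hne⟩, skipAt_unskipAt hjp⟩
    rwa [Set.mem_ofPred_eq, isBlock_comp_skipAt_of_ne hf.2.2.1 hne, skipAt_unskipAt hjp]

lemma blockCount_eq_encard_sdiff_add_single (hf : IsBlock f L p) :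
    blockCount f ℓ = ({i | IsBlock f ℓ i} \ {p}).encard + (Pi.single L 1 : ℕ → ℕ∞) ℓ := by
  rw [blockCount, ← Set.encard_sdiff_add_encard_inter _ {p}]
  congr 1
  rcases eq_or_ne ℓ L with rfl | hℓ
  · have hp : p ∈ {i | IsBlock f ℓ i} := hf
    rw [Set.inter_singleton_of_mem hp, Set.encard_singleton, Pi.single_eq_same]
  · have hp : p ∉ {i | IsBlock f ℓ i} := fun h => hℓ (h.length_unique hf)
    rw [Set.inter_singleton_of_notMem hp, Set.encard_empty, Pi.single_eq_of_ne hℓ]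

lemma blockCount_add_single (hL : 0 < L) (hf : IsBlock f (L + 1) p) :
    blockCount f + Pi.single L 1 = blockCount (f ∘ skipAt p) + Pi.single (L + 1) 1 := by
  funext ℓ
  have hskip : IsBlock (f ∘ skipAt p) L p := (isBlock_comp_skipAt_self hL hf.apply_start).2 hf
  rw [Pi.add_apply, Pi.add_apply, blockCount_eq_encard_sdiff_add_single hf,
    blockCount_eq_encard_sdiff_add_single hskip, ← image_skipAt_blocks hf,
    (skipAt_injective p).encard_image, add_right_comm]

end Block

section Ext

variable {n : ℕ}

lemma lt_of_ext_eq_false {x : Fin n → Bool} {j : ℕ} (h : ext x j = false) : j < n := by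
  by_contra hj
  exact absurd ((dif_neg hj).symm.trans h) (by decide)

lemma mem_starts {x : Fin n → Bool} {ℓ i : ℕ} : i ∈ starts x ℓ ↔ IsBlock (ext x) ℓ i := by
  rw [starts, Finset.mem_filter, Finset.mem_range, blockStart, IsBlock]
  constructor
  · rintro ⟨-, hℓ, -, hblock⟩
    exact ⟨hℓ, hblock⟩
  · rintro ⟨hℓ, hzero, hends⟩
    have hlast : i + ℓ - 1 < n := lt_of_ext_eq_false (hzero _ (by grind))
    exact ⟨by lia, hℓ, by lia, hzero, hends⟩

lemma lt_of_mem_starts {x : Fin n → Bool} {ℓ i : ℕ} (h : i ∈ starts x ℓ) : i < n :=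
  Finset.mem_range.1 (Finset.mem_filter.1 h).1

lemma natCast_numBlocks (x : Fin n → Bool) (ℓ : ℕ) :
    (numBlocks x ℓ : ℕ∞) = blockCount (ext x) ℓ := by
  rw [numBlocks, ← Set.encard_coe_eq_coe_finsetCard, blockCount]
  exact congrArg Set.encard (Set.ext fun _ => mem_starts)

lemma ext_eq_getD_ofFn (x : Fin n → Bool) (j : ℕ) : ext x j = (List.ofFn x).getD j true := by
  by_cases hj : j < n <;> simp [_root_.ext, hj]

lemma ext_comp_skipAt (x : Fin n → Bool) (p : ℕ) :
    ext x ∘ skipAt p = fun j => ((List.ofFn x).eraseIdx p).getD j true := by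
  funext j
  rw [Function.comp_apply, ext_eq_getD_ofFn, List.getD_eq_getElem?_getD,
    List.getD_eq_getElem?_getD, List.getElem?_eraseIdx, skipAt,
    apply_ite (fun k => (List.ofFn x)[k]?)]

end Ext

section Move

variable {n a b p q : ℕ} {x z : Fin n → Bool} {pq : ℕ × ℕ}

lemma ofFn_modifyStr (x : Fin n → Bool) (hp : p < n) (hq : q < n) :
    List.ofFn (modifyStr x p q) =
      ((List.ofFn x).eraseIdx p).insertIdx (unskipAt p q) false := by
  have hlen : (((List.ofFn x).eraseIdx p).insertIdx (unskipAt p q) false).length = n := by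
    have := unskipAt_le_pred hp hq
    grind
  refine List.ext_getElem (by rw [hlen, List.length_ofFn]) fun i _ hi => ?_
  rw [List.getElem_ofFn, modifyStr]
  exact List.getD_eq_getElem _ _ hi

lemma ext_modifyStr_comp_skipAt (x : Fin n → Bool) (hp : p < n) (hq : q < n) :
    ext (modifyStr x p q) ∘ skipAt (unskipAt p q) = ext x ∘ skipAt p := by
  rw [ext_comp_skipAt, ext_comp_skipAt, ofFn_modifyStr x hp hq, List.eraseIdx_insertIdx_self]

lemma ext_modifyStr_unskipAt (x : Fin n → Bool) (hp : p < n) (hq : q < n) :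
    ext (modifyStr x p q) (unskipAt p q) = false := by
  have := unskipAt_le_pred hp hq
  rw [ext_eq_getD_ofFn, ofFn_modifyStr x hp hq, List.getD_eq_getElem?_getD,
    List.getElem?_insertIdx_self]
  grind

lemma modifyStr_modifyStr (hp : ext x p = false) (hq : q < n)
    (hs : skipAt (unskipAt p q) p < n) :
    modifyStr (modifyStr x p q) (unskipAt p q) (skipAt (unskipAt p q) p) = x := by
  have hpn : p < n := lt_of_ext_eq_false hp
  have hlen : p < (List.ofFn x).length := by rwa [List.length_ofFn]
  have hletter : false = (List.ofFn x)[p] := by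
    rw [← hp, ext_eq_getD_ofFn, List.getD_eq_getElem]
  have hg : unskipAt p q < n := lt_of_ext_eq_false (ext_modifyStr_unskipAt x hpn hq)
  apply List.ofFn_injective
  rw [ofFn_modifyStr _ hg hs, ofFn_modifyStr x hpn hq, List.eraseIdx_insertIdx_self,
    unskipAt_skipAt, hletter, List.insertIdx_eraseIdx_getElem hlen]

lemma unskipAt_ne_of_mem_starts (hp : p ∈ starts x (a + 1)) (hq : q ∈ starts x b) (hqp : q ≠ p) :
    unskipAt p q ≠ p := fun h =>
  (unskipAt_eq_self_iff.1 h).elim hqp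
    ((mem_starts.1 hq).ne_succ (mem_starts.1 hp).apply_start)

lemma unskipAt_mem_starts (hp : p ∈ starts x (a + 1)) (hq : q ∈ starts x b) (hqp : q ≠ p) :
    unskipAt p q ∈ starts (modifyStr x p q) (b + 1) := by
  have hg := unskipAt_ne_of_mem_starts hp hq hqp
  have hpn : p < n := lt_of_mem_starts hp
  have hqn : q < n := lt_of_mem_starts hq
  rw [mem_starts] at hp hq ⊢
  rwa [← isBlock_comp_skipAt_self hq.1 (ext_modifyStr_unskipAt x hpn hqn),
    ext_modifyStr_comp_skipAt x hpn hqn, isBlock_comp_skipAt_of_ne hp.2.2.1 hg,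
    skipAt_unskipAt hqp]

lemma skipAt_unskipAt_mem_starts (ha : 0 < a) (hp : p ∈ starts x (a + 1)) (hq : q ∈ starts x b)
    (hqp : q ≠ p) : skipAt (unskipAt p q) p ∈ starts (modifyStr x p q) a := by
  have hg := unskipAt_ne_of_mem_starts hp hq hqp
  have hnew := unskipAt_mem_starts hp hq hqp
  have hpn : p < n := lt_of_mem_starts hp
  have hqn : q < n := lt_of_mem_starts hq
  rw [mem_starts] at hp hq hnew ⊢
  rwa [← isBlock_comp_skipAt_of_ne hnew.2.2.1 hg.symm, ext_modifyStr_comp_skipAt x hpn hqn,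
    isBlock_comp_skipAt_self ha hp.apply_start]

/-- Both strings lose their surplus zero to the same word, `ext x ∘ skipAt p`. -/
lemma numBlocks_modifyStr (ha : 0 < a) (hp : p ∈ starts x (a + 1)) (hq : q ∈ starts x b)
    (hqp : q ≠ p) :
    numBlocks (modifyStr x p q) + Pi.single b 1 + Pi.single (a + 1) 1 =
      numBlocks x + Pi.single a 1 + Pi.single (b + 1) 1 := by
  have hnew := unskipAt_mem_starts hp hq hqp
  have hpn : p < n := lt_of_mem_starts hp
  have hqn : q < n := lt_of_mem_starts hq
  rw [mem_starts] at hp hq hnew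
  have hcount : blockCount (ext (modifyStr x p q)) + Pi.single b 1 + Pi.single (a + 1) 1 =
      blockCount (ext x) + Pi.single a 1 + Pi.single (b + 1) 1 := by
    rw [blockCount_add_single hq.1 hnew, ext_modifyStr_comp_skipAt x hpn hqn, add_right_comm,
      ← blockCount_add_single ha hp]
  funext ℓ
  have hℓ := congrFun hcount ℓ
  simp only [Pi.add_apply, ← natCast_numBlocks, Pi.single_apply] at hℓ ⊢
  exact_mod_cast hℓ

/-- The moves of a zero from a block of length `a + 1` to a block of length `b` which turn `x`
into `z`, given by the starting positions of the two blocks. -/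
def moves {n : ℕ} (a b : ℕ) (x z : Fin n → Bool) : Finset (ℕ × ℕ) :=
  (starts x (a + 1) ×ˢ starts x b).filter fun pq => modifyStr x pq.1 pq.2 = z

lemma mem_moves : pq ∈ moves a b x z ↔
    (pq.1 ∈ starts x (a + 1) ∧ pq.2 ∈ starts x b) ∧ modifyStr x pq.1 pq.2 = z := by
  rw [moves, Finset.mem_filter, Finset.mem_product]

lemma ne_of_mem_moves (hab : a + 1 ≠ b) (h : pq ∈ moves a b x z) : pq.2 ≠ pq.1 := by
  rw [mem_moves, mem_starts, mem_starts] at h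
  exact fun hpq => hab (h.1.1.length_unique (hpq ▸ h.1.2))

lemma numBlocks_of_mem_moves (ha : 0 < a) (hab : a + 1 ≠ b) (h : pq ∈ moves a b x z) :
    numBlocks z + (Pi.single b 1 + Pi.single (a + 1) 1) =
      numBlocks x + (Pi.single a 1 + Pi.single (b + 1) 1) := by
  have hne := ne_of_mem_moves hab h
  obtain ⟨⟨hp, hq⟩, rfl⟩ := mem_moves.1 h
  simpa only [add_assoc] using numBlocks_modifyStr ha hp hq hne

lemma reverseMove_mem_moves (ha : 0 < a) (hab : a + 1 ≠ b) (h : pq ∈ moves a b x z) :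
    reverseMove pq ∈ moves b a z x := by
  have hne := ne_of_mem_moves hab h
  obtain ⟨⟨hp, hq⟩, rfl⟩ := mem_moves.1 h
  have hback := skipAt_unskipAt_mem_starts ha hp hq hne
  exact mem_moves.2 ⟨⟨unskipAt_mem_starts hp hq hne, hback⟩,
    modifyStr_modifyStr (mem_starts.1 hp).apply_start (lt_of_mem_starts hq)
      (lt_of_mem_starts hback)⟩

lemma card_moves_comm (ha : 0 < a) (hb : 0 < b) (hab : a + 1 ≠ b) (hba : b + 1 ≠ a)
    (x z : Fin n → Bool) : (moves a b x z).card = (moves b a z x).card :=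
  Finset.card_bij' (fun pq _ => reverseMove pq) (fun pq _ => reverseMove pq)
    (fun _ => reverseMove_mem_moves ha hab) (fun _ => reverseMove_mem_moves hb hba)
    (fun _ h => reverseMove_reverseMove (ne_of_mem_moves hab h))
    (fun _ h => reverseMove_reverseMove (ne_of_mem_moves hba h))

lemma sum_card_moves (a b : ℕ) (x : Fin n → Bool) :
    ∑ z, (moves a b x z).card = numBlocks x (a + 1) * numBlocks x b := by
  rw [numBlocks, numBlocks, ← Finset.card_product]
  exact (Finset.card_eq_sum_card_fiberwise fun _ _ => Finset.mem_coe.2 (Finset.mem_univ _)).symm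

end Move

section Uniform

variable {α β M K : Type*} [Fintype α] [Fintype β] {S : Finset α} {T : Finset β}

lemma sum_eq_sum_univ_of_support [AddCommMonoid M] {f : α → M} (hf : ∀ x, f x ≠ 0 → x ∈ S) :
    ∑ x ∈ S, f x = ∑ x, f x :=
  Finset.sum_subset (Finset.subset_univ S) fun x _ hx => not_imp_comm.1 (hf x) hx

lemma card_nsmul_eq_card_nsmul_of_biregular [AddCommMonoid M] {w : α → β → M} {d e : M}
    (hrow : ∀ x ∈ S, ∑ z, w x z = d) (hcol : ∀ z ∈ T, ∑ x, w x z = e)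
    (hsupp : ∀ x z, w x z ≠ 0 → (x ∈ S ↔ z ∈ T)) : S.card • d = T.card • e := by
  calc S.card • d = ∑ x ∈ S, ∑ z ∈ T, w x z := by
        rw [← Finset.sum_const]
        refine Finset.sum_congr rfl fun x hx => ?_
        rw [sum_eq_sum_univ_of_support fun z hz => (hsupp x z hz).1 hx, hrow x hx]
    _ = ∑ z ∈ T, ∑ x ∈ S, w x z := Finset.sum_comm
    _ = T.card • e := by
        rw [← Finset.sum_const]
        refine Finset.sum_congr rfl fun z hz => ?_
        rw [sum_eq_sum_univ_of_support fun x hx => (hsupp x z hx).2 hz, hcol z hz]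

lemma uniform_of_biregular [DecidableEq β] [Field K] [CharZero K] {w : α → β → K} {d e : K}
    (hS : S.Nonempty) (hd : d ≠ 0) (hrow : ∀ x ∈ S, ∑ z, w x z = d)
    (hcol : ∀ z ∈ T, ∑ x, w x z = e) (hsupp : ∀ x z, w x z ≠ 0 → (x ∈ S ↔ z ∈ T)) (z : β) :
    (∑ x ∈ S, w x z / d) / (S.card : K) = if z ∈ T then 1 / (T.card : K) else 0 := by
  rw [← Finset.sum_div]
  split_ifs with hz
  · have hScard : (S.card : K) ≠ 0 := Nat.cast_ne_zero.2 hS.card_ne_zero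
    have hTcard : (T.card : K) ≠ 0 := Nat.cast_ne_zero.2 (Finset.card_ne_zero_of_mem hz)
    have hdouble := card_nsmul_eq_card_nsmul_of_biregular hrow hcol hsupp
    rw [nsmul_eq_mul, nsmul_eq_mul] at hdouble
    rw [sum_eq_sum_univ_of_support fun x hx => (hsupp x z hx).2 hz, hcol z hz, div_div,
      div_eq_div_iff (mul_ne_zero hd hScard) hTcard, one_mul, mul_comm d, hdouble, mul_comm]
  · have hzero : ∀ x ∈ S, w x z = 0 := fun x hx =>
      not_imp_comm.1 (fun hw => (hsupp x z hw).1 hx) hz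
    rw [Finset.sum_eq_zero hzero, zero_div, zero_div]

end Uniform

section Counts

variable {n a b : ℕ} {Λ : Set ℕ} {m m' : ℕ → ℕ}

/-- The strings of length `n` whose numbers of blocks of zeros of the lengths in `Λ` are prescribed
by `m`. -/
def stringsWithCounts (n : ℕ) (Λ : Set ℕ) (m : ℕ → ℕ) : Finset (Fin n → Bool) :=
  Finset.univ.filter fun x => Set.EqOn (numBlocks x) m Λ

lemma mem_stringsWithCounts {x : Fin n → Bool} :
    x ∈ stringsWithCounts n Λ m ↔ Set.EqOn (numBlocks x) m Λ := by
  rw [stringsWithCounts, Finset.mem_filter, and_iff_right (Finset.mem_univ x)]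

lemma mem_stringsWithCounts_iff_of_numBlocks_add {x z : Fin n → Bool} {r s : ℕ → ℕ}
    (hxz : numBlocks z + r = numBlocks x + s) (hm' : m' + r = m + s) :
    x ∈ stringsWithCounts n Λ m ↔ z ∈ stringsWithCounts n Λ m' := by
  rw [mem_stringsWithCounts, mem_stringsWithCounts]
  refine forall₂_congr fun ℓ _ => ?_
  have hxzℓ := congrFun hxz ℓ
  have hmℓ := congrFun hm' ℓ
  simp only [Pi.add_apply] at hxzℓ hmℓ
  lia

theorem modified_string_is_uniform_general (ha : 0 < a) (hb : 0 < b) (hab : a + 1 ≠ b)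
    (hba : b + 1 ≠ a) (hΛ : {a, a + 1, b, b + 1} ⊆ Λ)
    (hm' : m' + (Pi.single b 1 + Pi.single (a + 1) 1) = m + (Pi.single a 1 + Pi.single (b + 1) 1))
    (hma : 0 < m (a + 1)) (hmb : 0 < m b) (hne : (stringsWithCounts n Λ m).Nonempty)
    (z : Fin n → Bool) :
    (∑ x ∈ stringsWithCounts n Λ m, ((moves a b x z).card : ℝ) / ((m (a + 1) : ℝ) * (m b : ℝ)))
        / ((stringsWithCounts n Λ m).card : ℝ)
      = if z ∈ stringsWithCounts n Λ m'
        then 1 / ((stringsWithCounts n Λ m').card : ℝ) else 0 := by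
  have hrow : ∀ x ∈ stringsWithCounts n Λ m,
      ∑ z, ((moves a b x z).card : ℝ) = m (a + 1) * m b := by
    intro x hx
    have hcount : Set.EqOn (numBlocks x) m Λ := mem_stringsWithCounts.1 hx
    rw [← hcount (hΛ (by simp)), ← hcount (hΛ (show b ∈ _ by simp))]
    exact_mod_cast sum_card_moves a b x
  have hcol : ∀ z ∈ stringsWithCounts n Λ m',
      ∑ x, ((moves a b x z).card : ℝ) = m' (b + 1) * m' a := by
    intro z hz
    have hcount : Set.EqOn (numBlocks z) m' Λ := mem_stringsWithCounts.1 hz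
    simp only [card_moves_comm ha hb hab hba]
    rw [← hcount (hΛ (by simp)), ← hcount (hΛ (show a ∈ _ by simp))]
    exact_mod_cast sum_card_moves b a z
  refine uniform_of_biregular hne (by positivity) hrow hcol (fun x z hw => ?_) z
  obtain ⟨pq, hpq⟩ := Finset.card_ne_zero.1 (Nat.cast_ne_zero.1 hw)
  exact mem_stringsWithCounts_iff_of_numBlocks_add (numBlocks_of_mem_moves ha hab hpq) hm'

/-- The function with the values `m1`, `m2`, `m4`, `m5` at `1`, `2`, `4`, `5`, and `0` elsewhere. -/
def countVector (m1 m2 m4 m5 : ℕ) : ℕ → ℕ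
  | 1 => m1
  | 2 => m2
  | 4 => m4
  | 5 => m5
  | _ => 0

lemma strSet_eq_stringsWithCounts (n m1 m2 m4 m5 : ℕ) :
    strSet n m1 m2 m4 m5 = stringsWithCounts n {1, 2, 4, 5} (countVector m1 m2 m4 m5) := by
  ext x
  simp [strSet, stringsWithCounts, Set.EqOn, countVector]

lemma countVector_move {m1 m5 : ℕ} (m2 m4 : ℕ) (hm1 : 1 ≤ m1) (hm5 : 1 ≤ m5) :
    countVector (m1 - 1) (m2 + 1) (m4 + 1) (m5 - 1) + (Pi.single 1 1 + Pi.single 5 1) =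
      countVector m1 m2 m4 m5 + (Pi.single 4 1 + Pi.single 2 1) := by
  funext ℓ
  simp only [Pi.add_apply, Pi.single_apply]
  unfold countVector
  split <;> grind

end Counts

/-- if `X'` is uniform on the strings with block-count vector
`m⃗ = (m1, m2, m4, m5)` (with `m1, m5 ≥ 1`) and `X''` is obtained from `X'` by removing a zero
from a uniformly chosen block of zeros of length 5 and adding it to a uniformly chosen block of
zeros of length 1, then `X''` is uniform on the strings with block-count vector `m⃗ + e⃗`,
`e⃗ = (-1, 1, 1, -1)`. -/
theorem modified_string_is_uniform (n m1 m2 m4 m5 : ℕ) (hm1 : 1 ≤ m1) (hm5 : 1 ≤ m5)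
    (hne : (strSet n m1 m2 m4 m5).Nonempty) :
    ∀ z : Fin n → Bool,
      (∑ x ∈ strSet n m1 m2 m4 m5, (pairCount x z : ℝ) / ((m5 : ℝ) * (m1 : ℝ)))
          / ((strSet n m1 m2 m4 m5).card : ℝ)
        = if z ∈ strSet n (m1 - 1) (m2 + 1) (m4 + 1) (m5 - 1)
          then 1 / ((strSet n (m1 - 1) (m2 + 1) (m4 + 1) (m5 - 1)).card : ℝ) else 0 := by
  intro z
  simp only [strSet_eq_stringsWithCounts] at hne ⊢
  exact modified_string_is_uniform_general (a := 4) (b := 1) four_pos one_pos (by decide)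
    (by decide) (by grind) (countVector_move m2 m4 hm1 hm5) hm5 hm1 hne z
end
end

section
/- With μ_i = E[N_i], one has P(|N_i − μ_i| ≤ √(55n/4) for every i ∈ {1, 2, 4, 5}) ≥ 1/5; in particular, P(N⃗ ∈ Iⁿ) ≥ 1/5. -/
/-!
The four counts are controlled by Chebyshev's inequality and a union bound, and their variances by
the Efron–Stein inequality. Changing the letter at `k` only destroys blocks that start in
`[k - ℓ, k + 1]`; blocks of length `ℓ` start at least `ℓ + 1` apart, so there are at most two of
these. Hence `N_ℓ` changes by at most `2`, its variance is at most `n`, and `|N_ℓ - μ_ℓ| > √(55n/4)`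
has probability at most `4/55`; finally `1 - 4 · 4/55 ≥ 1/5`.
-/

open scoped Classical
open Finset

noncomputable section

open scoped BigOperators

section UniformVariance

variable {Ω α β : Type*} [Fintype Ω] [Fintype α] [Fintype β]

/-- The variance of `f` under the uniform probability measure on the finite type `Ω`, expressed
through the averages `𝔼`; it is `0` if `Ω` is empty. -/
def uniformVariance (f : Ω → ℝ) : ℝ := 𝔼 x, (f x - 𝔼 y, f y) ^ 2

lemma uniformVariance_nonneg (f : Ω → ℝ) : 0 ≤ uniformVariance f :=
  expect_nonneg fun _ _ => sq_nonneg _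

lemma expect_sub_sq [Nonempty Ω] (f : Ω → ℝ) (a : ℝ) :
    𝔼 x, (f x - a) ^ 2 = 𝔼 x, f x ^ 2 - 2 * a * 𝔼 x, f x + a ^ 2 := by
  calc 𝔼 x, (f x - a) ^ 2 = 𝔼 x, (f x ^ 2 - 2 * a * f x + a ^ 2) :=
        expect_congr rfl fun x _ => by ring
    _ = 𝔼 x, f x ^ 2 - 2 * a * 𝔼 x, f x + a ^ 2 := by
        rw [expect_add_distrib, expect_sub_distrib, ← mul_expect, Fintype.expect_const]

lemma uniformVariance_eq_sub (f : Ω → ℝ) :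
    uniformVariance f = 𝔼 x, f x ^ 2 - (𝔼 x, f x) ^ 2 := by
  cases isEmpty_or_nonempty Ω
  · simp [uniformVariance]
  · rw [uniformVariance, expect_sub_sq]
    ring

lemma sq_expect_le_expect_sq (f : Ω → ℝ) : (𝔼 x, f x) ^ 2 ≤ 𝔼 x, f x ^ 2 :=
  sub_nonneg.1 <| uniformVariance_eq_sub f ▸ uniformVariance_nonneg f

lemma uniformVariance_le_expect_sub_sq (f : Ω → ℝ) (a : ℝ) :
    uniformVariance f ≤ 𝔼 x, (f x - a) ^ 2 := by
  cases isEmpty_or_nonempty Ω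
  · simp [uniformVariance]
  · rw [uniformVariance_eq_sub, expect_sub_sq]
    linarith [sq_nonneg (𝔼 x, f x - a)]

lemma popoviciu_uniformVariance_le {f : Ω → ℝ} {d : ℝ} (hf : ∀ x y, f x - f y ≤ d) :
    uniformVariance f ≤ (d / 2) ^ 2 := by
  cases isEmpty_or_nonempty Ω
  · simpa [uniformVariance] using sq_nonneg (d / 2)
  obtain ⟨top, htop⟩ := Finite.exists_max f
  obtain ⟨bot, hbot⟩ := Finite.exists_min f
  refine (uniformVariance_le_expect_sub_sq f ((f top + f bot) / 2)).trans
    (expect_le univ_nonempty fun x _ => sq_le_sq' ?_ ?_) <;>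
  linarith [htop x, hbot x, hf top bot]

lemma uniformVariance_comp_equiv (e : α ≃ Ω) (f : Ω → ℝ) :
    uniformVariance (f ∘ e) = uniformVariance f := by
  have hmean : 𝔼 a, (f ∘ e) a = 𝔼 x, f x := Fintype.expect_equiv e _ _ fun _ => rfl
  rw [uniformVariance, hmean]
  exact Fintype.expect_equiv e _ _ fun _ => rfl

lemma uniformVariance_expect_le (f : α → Ω → ℝ) :
    uniformVariance (fun x => 𝔼 a, f a x) ≤ 𝔼 a, uniformVariance (f a) := by
  simp only [uniformVariance]
  rw [expect_comm univ univ fun x a => f a x,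
    expect_comm univ univ fun a x => (f a x - 𝔼 y, f a y) ^ 2]
  refine expect_le_expect fun x _ => ?_
  rw [← expect_sub_distrib]
  exact sq_expect_le_expect_sq _

lemma uniformVariance_prod (f : α × β → ℝ) :
    uniformVariance f = uniformVariance (fun b => 𝔼 a, f (a, b))
      + 𝔼 b, uniformVariance (fun a => f (a, b)) := by
  have expect_prod (g : α × β → ℝ) : 𝔼 p, g p = 𝔼 b, 𝔼 a, g (a, b) := by
    rw [expect_comm, ← univ_product_univ, expect_product]
  simp only [uniformVariance_eq_sub, expect_sub_distrib, expect_prod]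
  ring

lemma chebyshev_sq_mul_expect_indicator_le (f : Ω → ℝ) {t : ℝ} (ht : 0 ≤ t) :
    t ^ 2 * 𝔼 x, {x | t < |f x - 𝔼 y, f y|}.indicator 1 x ≤ uniformVariance f := by
  rw [mul_expect]
  refine expect_le_expect fun x _ => ?_
  by_cases hx : t < |f x - 𝔼 y, f y|
  · simpa [Set.indicator, hx] using pow_le_pow_left₀ ht hx.le 2
  · simpa [Set.indicator, hx] using sq_nonneg _

end UniformVariance

section EfronStein

variable {α : Type*} [Fintype α]

lemma expect_fin_cons {n : ℕ} (f : (Fin (n + 1) → α) → ℝ) :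
    𝔼 x, f x = 𝔼 a, 𝔼 x : Fin n → α, f (Fin.cons a x) := by
  rw [← expect_product', univ_product_univ]
  exact (Fintype.expect_equiv (Fin.consEquiv fun _ => α) _ _ fun _ => rfl).symm

/-- In the induction step the total variance splits into the variance of the average over the first
letter, to which the induction hypothesis applies, and the average variance in the first letter. -/
theorem efron_stein [Nonempty α] {n : ℕ} (f : (Fin n → α) → ℝ) :
    uniformVariance f ≤ ∑ k, 𝔼 x, uniformVariance fun a => f (Function.update x k a) := by
  induction n with
  | zero => simp [uniformVariance]
  | succ n ih =>
    set g : α → (Fin n → α) → ℝ := fun a x => f (Fin.cons a x) with hg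
    have first_letter : 𝔼 x, uniformVariance (fun a => g a x)
        = 𝔼 x, uniformVariance fun a => f (Function.update x 0 a) := by
      simp only [expect_fin_cons, Fin.update_cons_zero, Fintype.expect_const, hg]
    have other_letters (k : Fin n) :
        𝔼 x, uniformVariance (fun b => 𝔼 a, g a (Function.update x k b))
          ≤ 𝔼 x, uniformVariance fun b => f (Function.update x k.succ b) := by
      simp only [expect_fin_cons, ← Fin.cons_update]
      rw [expect_comm]
      exact expect_le_expect fun x _ => uniformVariance_expect_le _
    calc uniformVariance f
        = uniformVariance (fun x => 𝔼 a, g a x) + 𝔼 x, uniformVariance (fun a => g a x) := by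
          rw [← uniformVariance_comp_equiv (Fin.consEquiv fun _ => α), uniformVariance_prod]
          rfl
      _ ≤ ∑ k : Fin n, 𝔼 x, uniformVariance (fun b => f (Function.update x k.succ b))
            + 𝔼 x, uniformVariance (fun a => f (Function.update x 0 a)) :=
          add_le_add ((ih _).trans (sum_le_sum fun k _ => other_letters k)) first_letter.le
      _ = ∑ k, 𝔼 x, uniformVariance fun a => f (Function.update x k a) := by
          rw [Fin.sum_univ_succ, add_comm]

lemma uniformVariance_le_of_bounded_differences [Nonempty α] {n : ℕ} {f : (Fin n → α) → ℝ} {d : ℝ}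
    (hf : ∀ x k a, f (Function.update x k a) - f x ≤ d) :
    uniformVariance f ≤ n * (d / 2) ^ 2 := by
  have letter (x : Fin n → α) (k : Fin n) :
      uniformVariance (fun a => f (Function.update x k a)) ≤ (d / 2) ^ 2 :=
    popoviciu_uniformVariance_le fun a b => by simpa using hf (Function.update x k b) k a
  calc uniformVariance f ≤ ∑ k, 𝔼 x, uniformVariance fun a => f (Function.update x k a) :=
        efron_stein f
    _ ≤ ∑ _k : Fin n, (d / 2) ^ 2 :=
        sum_le_sum fun k _ => expect_le univ_nonempty fun x _ => letter x k
    _ = n * (d / 2) ^ 2 := by simp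

end EfronStein

section RandomBinaryString

variable {n : ℕ}

lemma expX_eq_expect (f : (Fin n → Bool) → ℝ) : expX n f = 𝔼 x, f x := by
  simp [expX, Fintype.expect_eq_sum_div_card]

lemma probX_eq_expect_indicator (E : (Fin n → Bool) → Prop) :
    probX n E = 𝔼 x, {x | E x}.indicator 1 x := by
  simp [probX, Fintype.expect_eq_sum_div_card, Set.indicator]

lemma one_sub_sum_probX_not_le_probX_forall {ι : Type*} (s : Finset ι)
    (E : ι → (Fin n → Bool) → Prop) :
    1 - ∑ i ∈ s, probX n (fun x => ¬ E i x) ≤ probX n fun x => ∀ i ∈ s, E i x := by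
  simp only [probX_eq_expect_indicator]
  rw [← expect_sum_comm, ← Fintype.expect_one (ι := Fin n → Bool) (M := ℝ), ← expect_sub_distrib]
  refine expect_le_expect fun x _ => ?_
  have indicator_nonneg (i : ι) : (0 : ℝ) ≤ {x | ¬ E i x}.indicator 1 x :=
    Set.indicator_nonneg (fun _ _ => zero_le_one) x
  by_cases hx : ∀ i ∈ s, E i x
  · simpa [Set.indicator_of_mem (s := {x | ∀ i ∈ s, E i x}) hx]
      using sum_nonneg fun i _ => indicator_nonneg i
  · have ⟨i, hi, hxi⟩ : ∃ i ∈ s, ¬ E i x := by simpa using hx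
    rw [Set.indicator_of_notMem (s := {x | ∀ i ∈ s, E i x}) hx, sub_nonpos]
    calc (1 : ℝ) = {x | ¬ E i x}.indicator 1 x :=
          (Set.indicator_of_mem (s := {x | ¬ E i x}) hxi 1).symm
      _ ≤ ∑ i ∈ s, {x | ¬ E i x}.indicator 1 x :=
          single_le_sum (fun i _ => indicator_nonneg i) hi

lemma probX_sqrt_lt_abs_sub_expX_le {f : (Fin n → Bool) → ℝ} {c d : ℝ} (hc : 0 < c)
    (hf : ∀ x k b, f (Function.update x k b) - f x ≤ d) :
    probX n (fun x => √(c * n) < |f x - expX n f|) ≤ (d / 2) ^ 2 / c := by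
  rcases n.eq_zero_or_pos with rfl | hn
  · have hmean (x : Fin 0 → Bool) : f x = expX 0 f := by
      rw [expX_eq_expect, expect_congr rfl fun y _ => congrArg f (Subsingleton.elim y x),
        Fintype.expect_const]
    have hprob : probX 0 (fun x => √(c * (0 : ℕ)) < |f x - expX 0 f|) = 0 := by
      simp [hmean, probX]
    rw [hprob]
    positivity
  · have hcn : 0 < c * n := by positivity
    have chebyshev := (chebyshev_sq_mul_expect_indicator_le f (Real.sqrt_nonneg (c * n))).trans
      (uniformVariance_le_of_bounded_differences hf)
    rw [Real.sq_sqrt hcn.le, ← probX_eq_expect_indicator, ← expX_eq_expect] at chebyshev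
    rw [le_div_iff₀ hc]
    refine le_of_mul_le_mul_left ?_ (Nat.cast_pos.2 hn : (0 : ℝ) < n)
    linarith

end RandomBinaryString

section Blocks

variable {n : ℕ} {x : Fin n → Bool} {ℓ i j : ℕ}

lemma ext_update_of_ne (x : Fin n → Bool) {k : Fin n} (b : Bool) (h : j ≠ k) :
    ext (Function.update x k b) j = ext x j := by
  unfold _root_.ext
  split_ifs with hj
  · exact Function.update_of_ne (a := ⟨j, hj⟩) (Fin.ne_of_val_ne h) b x
  · rfl

lemma mem_starts_s6 : i ∈ starts x ℓ ↔ blockStart x ℓ i := by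
  refine ⟨fun h => (mem_filter.1 h).2, fun h => mem_filter.2 ⟨mem_range.2 ?_, h⟩⟩
  have := h.1
  have := h.2.1
  omega

lemma blockStart.update {k : Fin n} (h : blockStart x ℓ i) (b : Bool)
    (hk : (k : ℕ) + 1 < i ∨ i + ℓ < k) : blockStart (Function.update x k b) ℓ i := by
  obtain ⟨hpos, hle, hzero, hleft, hright⟩ := h
  refine ⟨hpos, hle, fun j hj => ?_, hleft.imp_right fun hone => ?_, ?_⟩
  · have := mem_Ico.1 hj
    rw [ext_update_of_ne x b (by omega), hzero j hj]
  · rw [ext_update_of_ne x b (by omega), hone]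
  · rw [ext_update_of_ne x b (by omega), hright]

lemma blockStart.add_lt_of_lt (hi : blockStart x ℓ i) (hj : blockStart x ℓ j) (hij : i < j) :
    i + ℓ < j := by
  obtain ⟨-, -, -, -, hright⟩ := hi
  obtain ⟨-, -, hzero, -, -⟩ := hj
  by_contra! hle
  exact Bool.false_ne_true ((hzero (i + ℓ) (mem_Ico.2 (by omega))).symm.trans hright)

lemma card_starts_sdiff_starts_update_le (x : Fin n → Bool) (k : Fin n) (b : Bool) (ℓ : ℕ) :
    #(starts x ℓ \ starts (Function.update x k b) ℓ) ≤ 2 := by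
  set lost := starts x ℓ \ starts (Function.update x k b) ℓ with hlost
  have near {i : ℕ} (hi : i ∈ lost) : i ≤ k + 1 ∧ k ≤ i + ℓ := by
    simp only [hlost, mem_sdiff, mem_starts_s6] at hi
    by_contra! hfar
    exact hi.2 (hi.1.update b (by omega))
  have apart {i j : ℕ} (hi : i ∈ lost) (hj : j ∈ lost) (hij : i ≠ j) :
      i + ℓ < j ∨ j + ℓ < i := by
    have hi := mem_starts_s6.1 (mem_sdiff.1 hi).1
    have hj := mem_starts_s6.1 (mem_sdiff.1 hj).1
    exact hij.lt_or_gt.imp (hi.add_lt_of_lt hj) (hj.add_lt_of_lt hi)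
  by_contra! hcard
  obtain ⟨i₁, h₁, i₂, h₂, i₃, h₃, h₁₂, h₁₃, h₂₃⟩ := two_lt_card.1 hcard
  have := near h₁
  have := near h₂
  have := near h₃
  have := apart h₁ h₂ h₁₂
  have := apart h₁ h₃ h₁₃
  have := apart h₂ h₃ h₂₃
  omega

lemma numBlocks_le_numBlocks_update_add_two (x : Fin n → Bool) (k : Fin n) (b : Bool) (ℓ : ℕ) :
    numBlocks x ℓ ≤ numBlocks (Function.update x k b) ℓ + 2 := by
  have := card_le_card_sdiff_add_card (s := starts x ℓ) (t := starts (Function.update x k b) ℓ)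
  have := card_starts_sdiff_starts_update_le x k b ℓ
  unfold numBlocks
  omega

lemma numBlocks_update_sub_le_two (x : Fin n → Bool) (k : Fin n) (b : Bool) (ℓ : ℕ) :
    (numBlocks (Function.update x k b) ℓ : ℝ) - numBlocks x ℓ ≤ 2 := by
  have h := numBlocks_le_numBlocks_update_add_two (Function.update x k b) k (x k) ℓ
  rw [Function.update_idem, Function.update_eq_self] at h
  rw [sub_le_iff_le_add']
  exact_mod_cast h

end Blocks

theorem prob_block_counts_concentrate_general (n : ℕ) (L : Finset ℕ) {c : ℝ} (hc : 0 < c) :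
    1 - #L / c ≤ probX n (fun x => ∀ ℓ ∈ L,
      |(numBlocks x ℓ : ℝ) - expX n (fun z => (numBlocks z ℓ : ℝ))| ≤ √(c * n)) := by
  refine le_trans ?_ (one_sub_sum_probX_not_le_probX_forall L _)
  have deviation (ℓ : ℕ) : probX n (fun x =>
      √(c * n) < |(numBlocks x ℓ : ℝ) - expX n (fun z => (numBlocks z ℓ : ℝ))|) ≤ 1 / c := by
    simpa using probX_sqrt_lt_abs_sub_expX_le (f := fun x => (numBlocks x ℓ : ℝ)) hc
      fun x k b => numBlocks_update_sub_le_two x k b ℓ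
  simp only [not_le]
  calc 1 - #L / c = 1 - ∑ _ℓ ∈ L, 1 / c := by
        rw [sum_const, nsmul_eq_mul, mul_one_div]
    _ ≤ _ := sub_le_sub_left (sum_le_sum fun ℓ _ => deviation ℓ) 1

/-- with `μ_ℓ = E[N_ℓ]`, the probability that
`|N_ℓ - μ_ℓ| ≤ √(55n/4)` for every `ℓ ∈ {1, 2, 4, 5}` is at least `1/5`
(in particular `P(N⃗ ∈ Iⁿ) ≥ 1/5`). -/
theorem prob_block_counts_concentrate (n : ℕ) :
    (1 : ℝ) / 5 ≤ probX n (fun x => ∀ ℓ ∈ ({1, 2, 4, 5} : Finset ℕ),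
      |(numBlocks x ℓ : ℝ) - expX n (fun z => (numBlocks z ℓ : ℝ))|
        ≤ Real.sqrt (55 * n / 4)) := by
  have h := prob_block_counts_concentrate_general n {1, 2, 4, 5} (c := 55 / 4) (by norm_num)
  rw [div_mul_eq_mul_div] at h
  exact le_trans (by norm_num) h
end
end
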